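/- Let k be a commutative ring, G a finite group, and A a k-algebra on which G acts by k-algebra automorphisms. Then the following are equivalent: (1) the map can' : A ⊗_k A → (G → A), can'(a ⊗ b)(σ) = a·σ(b), is bijective and A is faithfully flat as a k-module; (2) the map j : (G → A) → End_k(A), j(u)(b) = Σ_{σ ∈ G} σ(b)·u(σ), is bijective and A is finitely generated, faithful and projective as a k-module. -/

import Mathlib

open TensorProduct

universe u

section Galois

variable (k A G : Type u) [CommRing k] [Ring A] [Algebra k A]
  [Group G] [Fintype G] [MulSemiringAction G A] [SMulCommClass G k A]

/-- The canonical map `can' : A ⊗_k A → (G → A)`, `can'(a ⊗ b)(σ) = a σ(b)`. -/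
noncomputable def canGal : A ⊗[k] A →ₗ[k] (G → A) :=
  TensorProduct.lift (LinearMap.mk₂ k (fun a b σ => a * σ • b)
    (fun a a' b => by funext σ; simp [add_mul])
    (fun r a b => by funext σ; simp [smul_mul_assoc])
    (fun a b b' => by funext σ; simp [smul_add, mul_add])
    (fun r a b => by
      funext σ
      simp only [Pi.smul_apply]
      rw [smul_comm σ r b, mul_smul_comm]))

/-- The map `j : (G → A) → End_k(A)`, `j(u)(b) = Σ_σ σ(b) u(σ)`. -/
noncomputable def jGal (u : G → A) : A →ₗ[k] A where
  toFun b := ∑ σ : G, σ • b * u σ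
  map_add' b b' := by simp [smul_add, add_mul, Finset.sum_add_distrib]
  map_smul' r b := by
    simp only [RingHom.id_apply, Finset.smul_sum]
    refine Finset.sum_congr rfl fun σ _ => ?_
    rw [smul_comm σ r b, smul_mul_assoc]

end Galois

section Helpers

variable {k A G : Type u} [CommRing k] [Ring A] [Algebra k A]
  [Group G] [Fintype G] [MulSemiringAction G A] [SMulCommClass G k A]

lemma canGal_tmul (a b : A) (σ : G) : canGal k A G (a ⊗ₜ b) σ = a * σ • b := by
  simp [canGal]

lemma jGal_apply (u : G → A) (b : A) : jGal k A G u b = ∑ σ : G, σ • b * u σ := rfl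

lemma smul_smul_one (σ : G) (r : k) : σ • (r • (1 : A)) = r • (1 : A) := by
  rw [smul_comm, smul_one]

/-- A faithfully flat algebra satisfies the equalizer property. -/
lemma mem_of_tmul_eq [Module.FaithfullyFlat k A] (a : A)
    (h : a ⊗ₜ[k] (1 : A) = (1 : A) ⊗ₜ[k] a) : ∃ r : k, r • (1 : A) = a := by
  let N : Submodule k A := Submodule.span k {1}
  have h1 := congrArg (LinearMap.lTensor A N.mkQ) h
  rw [LinearMap.lTensor_tmul, LinearMap.lTensor_tmul] at h1
  have h2 : N.mkQ (1 : A) = 0 := by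
    rw [Submodule.mkQ_apply, Submodule.Quotient.mk_eq_zero]
    exact Submodule.mem_span_singleton_self 1
  rw [h2, TensorProduct.tmul_zero] at h1
  have h3 := (Module.FaithfullyFlat.one_tmul_eq_zero_iff k _ (A := A) (N.mkQ a)).1 h1.symm
  rw [Submodule.mkQ_apply, Submodule.Quotient.mk_eq_zero] at h3
  exact Submodule.mem_span_singleton.1 h3

lemma forward (hc : Function.Bijective (canGal k A G)) (hf : Module.FaithfullyFlat k A) :
    Function.Bijective (fun u : G → A => jGal k A G u) ∧
      Module.Finite k A ∧ Module.Projective k A ∧ FaithfulSMul k A := by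
  classical
  have hinj : ∀ r : k, r • (1 : A) = 0 → r = 0 := by
    intro r hr
    apply (Module.FaithfullyFlat.one_tmul_eq_zero_iff k k (A := A) r).1
    have : (1 : A) ⊗ₜ[k] r = (r • (1 : A)) ⊗ₜ[k] (1 : k) := by
      rw [TensorProduct.smul_tmul, smul_eq_mul, mul_one]
    rw [this, hr, TensorProduct.zero_tmul]
  have hinj2 : ∀ r s : k, r • (1 : A) = s • (1 : A) → r = s := by
    intro r s h
    rw [← sub_eq_zero]
    apply hinj
    rw [sub_smul, h, sub_self]
  obtain ⟨t, ht⟩ := hc.2 (Pi.single 1 1)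
  obtain ⟨S, rfl⟩ := TensorProduct.exists_finset t
  have hS : ∀ σ : G, ∑ i ∈ S, i.1 * σ • i.2 = if σ = 1 then 1 else 0 := by
    intro σ
    have := congrFun ht σ
    simpa [map_sum, Finset.sum_apply, canGal_tmul, Pi.single_apply] using this
  have hS2 : ∀ τ σ : G, ∑ i ∈ S, τ • i.1 * σ • i.2 = if σ = τ then 1 else 0 := by
    intro τ σ
    have := congrArg (fun a => τ • a) (hS (τ⁻¹ * σ))
    simp only [Finset.smul_sum, smul_mul', smul_smul, mul_inv_cancel_left] at this
    rw [this]
    by_cases h : σ = τ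
    · subst h; simp
    · have : τ⁻¹ * σ ≠ 1 := fun h' => h (inv_mul_eq_one.1 h').symm
      simp [h, this]
  have htr : ∀ b : A, ∃ r : k, r • (1 : A) = ∑ σ : G, σ • b := by
    intro b
    apply mem_of_tmul_eq
    apply hc.1
    funext τ
    rw [canGal_tmul, canGal_tmul, smul_one, mul_one, one_mul, Finset.smul_sum]
    simp only [smul_smul]
    exact (Fintype.sum_equiv (Equiv.mulLeft τ) _ _ (fun σ => rfl)).symm
  choose c hcc using htr
  let T : A →ₗ[k] k :=
    { toFun := c
      map_add' := fun x y => hinj2 _ _ (by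
        rw [add_smul, hcc, hcc, hcc]; simp [Finset.sum_add_distrib])
      map_smul' := fun r x => hinj2 _ _ (by
        rw [RingHom.id_apply, smul_eq_mul, mul_smul, hcc, hcc, Finset.smul_sum]
        exact Finset.sum_congr rfl fun σ _ => smul_comm _ _ _) }
  have hT : ∀ b x : A, T b • x = ∑ σ : G, σ • b * x := by
    intro b x
    rw [← Finset.sum_mul, ← hcc b, smul_mul_assoc, one_mul]
    rfl
  have hdual : ∀ b : A, ∑ i ∈ S, T (b * i.1) • i.2 = b := by
    intro b
    simp only [hT, smul_mul']
    rw [Finset.sum_comm]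
    have : ∀ σ : G, ∑ i ∈ S, σ • b * σ • i.1 * i.2 = σ • b * if (1 : G) = σ then 1 else 0 := by
      intro σ
      rw [← hS2 σ 1, Finset.mul_sum]
      simp [mul_assoc]
    simp [this]
  let P : A →ₗ[k] (S → k) := LinearMap.pi fun i => T ∘ₗ LinearMap.mulRight k i.1.1
  let Q : (S → k) →ₗ[k] A := Fintype.linearCombination k (fun i : S => i.1.2)
  have hQP : Q ∘ₗ P = LinearMap.id := by
    ext b
    have h1 : (Q ∘ₗ P) b = ∑ i : S, T (b * i.1.1) • i.1.2 := by
      simp [Q, P, Fintype.linearCombination_apply]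
    rw [h1, LinearMap.id_apply, Finset.sum_coe_sort S (fun i => T (b * i.1) • i.2), hdual]
  refine ⟨⟨?_, ?_⟩, ?_, Module.Projective.of_split P Q hQP, ?_⟩
  · intro u v huv
    have key : ∀ (w : G → A) (τ : G), ∑ i ∈ S, τ • i.1 * jGal k A G w i.2 = w τ := by
      intro w τ
      simp only [jGal_apply, Finset.mul_sum]
      rw [Finset.sum_comm]
      simp only [← mul_assoc, ← Finset.sum_mul, hS2]
      simp
    funext τ
    rw [← key u, ← key v]
    simp only at huv
    rw [huv]
  · intro φ
    refine ⟨fun σ => ∑ i ∈ S, σ • i.1 * φ i.2, ?_⟩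
    ext b
    simp only [jGal_apply]
    conv_rhs => rw [← hdual b, map_sum]
    simp only [map_smul]
    simp only [hT, Finset.mul_sum, smul_mul', mul_assoc]
    rw [Finset.sum_comm]
  · exact Module.Finite.of_surjective Q fun b => ⟨P b, LinearMap.congr_fun hQP b⟩
  · exact ⟨fun {r s} h => hinj2 _ _ (h 1)⟩

lemma faithfullyFlat_aux [Module.Finite k A] [Module.Projective k A] [FaithfulSMul k A] :
    Module.FaithfullyFlat k A := by
  refine ⟨fun m hm h => ?_⟩
  obtain ⟨r, hr, h0⟩ := Submodule.exists_sub_one_mem_and_smul_eq_zero_of_fg_of_le_smul m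
    (⊤ : Submodule k A) Module.Finite.fg_top h.ge
  have : r = 0 := FaithfulSMul.eq_of_smul_eq_smul (α := A) fun a => by
    rw [h0 a trivial, zero_smul]
  subst this
  apply hm.ne_top
  rw [Ideal.eq_top_iff_one]
  simpa using hr

lemma backward (hj : Function.Bijective (fun u : G → A => jGal k A G u))
    [Module.Finite k A] [Module.Projective k A] [FaithfulSMul k A] :
    Function.Bijective (canGal k A G) := by
  classical
  obtain ⟨n, f, g, -, -, hfg⟩ := Module.Finite.exists_comp_eq_id_of_projective k A
  let e : Fin n → A := fun l => f (fun j => if l = j then 1 else 0)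
  have he : ∀ b : A, ∑ l, g b l • e l = b := by
    intro b
    have := LinearMap.congr_fun hfg b
    rw [LinearMap.comp_apply, LinearMap.pi_apply_eq_sum_univ f (g b)] at this
    exact this
  let F : Fin n → (A →ₗ[k] A) := fun l =>
    (LinearMap.toSpanSingleton k A 1) ∘ₗ (LinearMap.proj l) ∘ₗ g
  have hF : ∀ l b, F l b = g b l • (1 : A) := fun l b => rfl
  choose u hu using fun l => hj.2 (F l)
  have hu' : ∀ l b, ∑ σ : G, σ • b * u l σ = g b l • (1 : A) := by
    intro l b
    rw [← hF, ← hu l]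
    rfl
  constructor
  · rw [injective_iff_map_eq_zero]
    intro t ht
    obtain ⟨S, rfl⟩ := TensorProduct.exists_finset t
    have h1 : ∀ σ : G, ∑ i ∈ S, i.1 * σ • i.2 = 0 := by
      intro σ
      simpa [map_sum, Finset.sum_apply, canGal_tmul] using congrFun ht σ
    have h2 : ∀ l, ∑ i ∈ S, g i.2 l • i.1 = 0 := by
      intro l
      have : ∀ i : A × A, g i.2 l • i.1 = ∑ σ : G, i.1 * σ • i.2 * u l σ := by
        intro i
        simp only [mul_assoc]
        rw [← Finset.mul_sum, hu', mul_smul_comm, mul_one]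
      simp only [this]
      rw [Finset.sum_comm]
      simp only [← Finset.sum_mul, h1]
      simp
    have h3 : ∀ i : A × A, i.1 ⊗ₜ[k] i.2 = ∑ l, (g i.2 l • i.1) ⊗ₜ[k] e l := by
      intro i
      conv_lhs => rw [← he i.2, TensorProduct.tmul_sum]
      simp only [TensorProduct.smul_tmul]
    simp only [h3]
    rw [Finset.sum_comm]
    simp only [← TensorProduct.sum_tmul, h2, TensorProduct.zero_tmul, Finset.sum_const_zero]
  · have h1 : (fun σ : G => ∑ l, u l σ * e l) = Pi.single 1 1 := by
      apply hj.1
      ext b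
      simp only [jGal_apply, Finset.mul_sum]
      rw [Finset.sum_comm]
      simp only [← mul_assoc, ← Finset.sum_mul, hu']
      simp [he, Pi.single_apply]
    have h2 : ∀ l (τ σ : G), τ • u l σ = u l (τ * σ) := by
      intro l τ σ
      have : (fun σ : G => τ • u l (τ⁻¹ * σ)) = u l := by
        apply hj.1
        ext b
        simp only [jGal_apply]
        rw [hu', ← smul_smul_one τ, ← hu' l b, Finset.smul_sum]
        refine Fintype.sum_equiv (Equiv.mulLeft τ⁻¹) _ _ fun ρ => ?_
        simp [smul_mul', smul_smul]
      have := congrFun this (τ * σ)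
      simpa using this
    have h3 : ∀ σ : G, ∑ l, u l 1 * σ • e l = if σ = 1 then 1 else 0 := by
      intro σ
      have := congrArg (fun a => σ • a) (congrFun h1 σ⁻¹)
      simp only [Finset.smul_sum, smul_mul', h2, mul_inv_cancel] at this
      rw [this]
      by_cases h : σ = 1 <;> simp [h, Pi.single_apply]
    intro v
    refine ⟨∑ τ : G, ∑ l, (v τ * u l 1) ⊗ₜ[k] (τ⁻¹ • e l), ?_⟩
    funext σ
    simp only [map_sum, Finset.sum_apply, canGal_tmul, mul_assoc, smul_smul, ← Finset.mul_sum, h3]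
    simp [mul_inv_eq_one]

end Helpers

/-- For a finite group `G` acting on a `k`-algebra `A` by `k`-algebra automorphisms:
`can'` is bijective and `A` faithfully flat over `k` iff `j : (G → A) → End_k(A)` is
bijective and `A` is a `k`-progenerator. -/
theorem galois_iff_j_bijective
    (k A G : Type u) [CommRing k] [Ring A] [Algebra k A]
    [Group G] [Fintype G] [MulSemiringAction G A] [SMulCommClass G k A] :
    (Function.Bijective (canGal k A G) ∧ Module.FaithfullyFlat k A) ↔
    (Function.Bijective (fun u : G → A => jGal k A G u) ∧
      Module.Finite k A ∧ Module.Projective k A ∧ FaithfulSMul k A) := by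
  constructor
  · rintro ⟨hc, hf⟩
    exact forward hc hf
  · rintro ⟨hj, h1, h2, h3⟩
    exact ⟨backward hj, faithfullyFlat_aux⟩
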